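/- Let 2 ≤ p ≤ s be reals, A an n × d real matrix, g ∈ ℝ^n, and R̃ an n × n diagonal matrix with nonnegative entries. Define f : ℝ^d → ℝ by f(x) = ⟨g, Ax⟩ + (Ax)ᵀ R̃ (Ax) + ‖Ax‖_s^s, and let x* be a global minimizer of f. If x ∈ ℝ^d and E ≥ 0 satisfy f(x) − f(x*) ≤ E, then ω_p(Ax*, Ax) ≤ n^{(s−p)/s} ( 32 e p² ‖Ax*‖_s^{p−2} E^{2/s} + 3 (4p)^p E^{p/s} ), where e is Euler's number. -/

import Mathlib

/-!
Write `u = A x⋆`, `v = A x` and `h = u - v`. The linear and quadratic parts of `f` are convex and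
`|·|^s` satisfies Clarkson's inequality, so comparing `f` at `x⋆` with `f` at the midpoint of `x`
and `x⋆` gives `‖h‖_s^s ≤ 2^s E`; no differentiation of `f` is needed (`clarkson`).

For the scalar Bregman divergence, `ω_p(u, v) ≤ ω_p(u, v) + ω_p(v, u)
= p (φ(u) - φ(v)) (u - v)` with `φ(t) = |t|^(p-2) t`, and `φ` is Lipschitz with constant
`(p - 1) M^(p-2)` on `[-M, M]`. Taking `M = |u| + |h|` and separating the cases `p |h| ≤ |u|` and
`|u| ≤ p |h|` yields
`ω_p(u, v) ≤ p² (e |u|^(p-2) |h|² + (p+1)^(p-2) |h|^p)` (`bregman_scalar`).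
Summing over coordinates, Hölder's inequality with exponents `(s-p)/s`, `(p-2)/s`, `2/s`
(`holder_sum`) and the bound on `‖h‖_s` give the claim.
-/

open Finset

/-- The ℓ_q "norm" for real exponent q: ‖u‖_q = (Σ_i |u_i|^q)^(1/q). -/
noncomputable def lpNorm {n : ℕ} (q : ℝ) (u : Fin n → ℝ) : ℝ :=
  (∑ i, |u i| ^ q) ^ (1 / q)

/-- Bregman divergence of ‖·‖_p^p. -/
noncomputable def omegaP {n : ℕ} (p : ℝ) (u v : Fin n → ℝ) : ℝ :=
  (∑ i, |u i| ^ p) - (∑ i, |v i| ^ p) - ∑ i, p * |v i| ^ (p - 2) * v i * (u i - v i)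

/-- Tangent line inequality for `t ↦ t ^ q` at `a`, on the nonnegative reals. -/
lemma tangent_rpow {q a b : ℝ} (hq : 1 ≤ q) (ha : 0 ≤ a) (hb : 0 ≤ b) :
    a ^ q + q * a ^ (q - 1) * (b - a) ≤ b ^ q := by
  rcases ha.eq_or_lt with rfl | ha
  · rcases hq.eq_or_lt with rfl | hq
    · simp
    · rw [Real.zero_rpow (by linarith), Real.zero_rpow (by linarith)]
      simpa using Real.rpow_nonneg hb q
  · have h1 : (-1 : ℝ) ≤ b / a - 1 := by have := div_nonneg hb ha.le; linarith
    have h2 := one_add_mul_self_le_rpow_one_add h1 hq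
    rw [add_sub_cancel, Real.div_rpow hb ha.le, le_div_iff₀ (Real.rpow_pos_of_pos ha q)] at h2
    have h3 : a ^ q = a ^ (q - 1) * a := by
      rw [← Real.rpow_add_one ha.ne']; congr 1; ring
    have h4 : (1 + q * (b / a - 1)) * a ^ q = a ^ q + q * a ^ (q - 1) * (b - a) := by
      rw [h3]; field_simp
    linarith

lemma abs_rpow_eq {p : ℝ} (hp : 2 ≤ p) (a : ℝ) : |a| ^ p = |a| ^ (p - 2) * a ^ 2 := by
  rw [← sq_abs, ← Real.rpow_natCast, ← Real.rpow_add_of_nonneg (abs_nonneg a) (by linarith)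
    (by norm_num)]
  congr 1; push_cast; ring

/-- The scalar Bregman divergence of `|·| ^ p` is nonnegative. -/
lemma bregman_nonneg {p : ℝ} (hp : 2 ≤ p) (a b : ℝ) :
    0 ≤ |a| ^ p - |b| ^ p - p * |b| ^ (p - 2) * b * (a - b) := by
  have h := tangent_rpow (q := p) (by linarith) (abs_nonneg b) (abs_nonneg a)
  have e1 : |b| ^ (p - 1) = |b| ^ (p - 2) * |b| := by
    have := Real.rpow_add_of_nonneg (abs_nonneg b) (by linarith : 0 ≤ p - 2) zero_le_one
    rw [Real.rpow_one] at this
    rw [← this]; congr 1; ring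
  rw [e1] at h
  have h0 : 0 ≤ p * |b| ^ (p - 2) := by positivity
  have h1 : b * (a - b) ≤ |b| * (|a| - |b|) := by
    have h2 : b * a ≤ |b| * |a| := by rw [← abs_mul]; exact le_abs_self _
    have h3 : |b| * |b| = b * b := abs_mul_abs_self b
    linarith
  have := mul_le_mul_of_nonneg_left h1 h0
  linarith

/-- Lipschitz bound for `t ↦ t ^ (p - 1)` between two points of `[0, M]`. -/
lemma phi_lip_pos {p M a b : ℝ} (hp : 2 ≤ p) (hb : 0 ≤ b) (hba : b ≤ a) (ha : a ≤ M) :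
    a ^ (p - 2) * a - b ^ (p - 2) * b ≤ (p - 1) * M ^ (p - 2) * (a - b) := by
  have ha0 : 0 ≤ a := hb.trans hba
  have key : ∀ c : ℝ, 0 ≤ c → c ^ (p - 1) = c ^ (p - 2) * c := by
    intro c hc
    have := Real.rpow_add_of_nonneg hc (by linarith : 0 ≤ p - 2) zero_le_one
    rw [Real.rpow_one] at this
    rw [← this]; congr 1; ring
  have h := tangent_rpow (q := p - 1) (by linarith) ha0 hb
  rw [key a ha0, key b hb, show p - 1 - 1 = p - 2 by ring] at h
  have h1 : a ^ (p - 2) ≤ M ^ (p - 2) := Real.rpow_le_rpow ha0 ha (by linarith)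
  have h2 := mul_le_mul_of_nonneg_left h1
    (mul_nonneg (by linarith : 0 ≤ p - 1) (sub_nonneg.2 hba))
  linarith

lemma phi_lip {p M : ℝ} (hp : 2 ≤ p) (a b : ℝ) (ha : |a| ≤ M) (hb : |b| ≤ M) :
    (|a| ^ (p - 2) * a - |b| ^ (p - 2) * b) * (a - b) ≤ (p - 1) * M ^ (p - 2) * (a - b) ^ 2 := by
  -- The inequality is symmetric in `a` and `b`, so `b ≤ a` may be assumed.
  wlog hba : b ≤ a generalizing a b
  · have := this b a hb ha (le_of_not_ge hba)
    linarith
  suffices h : |a| ^ (p - 2) * a - |b| ^ (p - 2) * b ≤ (p - 1) * M ^ (p - 2) * (a - b) by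
    have := mul_le_mul_of_nonneg_right h (sub_nonneg.2 hba)
    linarith
  rcases le_total 0 b with h0b | h0b
  · have h0a := h0b.trans hba
    rw [abs_of_nonneg h0a] at ha ⊢
    rw [abs_of_nonneg h0b]
    exact phi_lip_pos hp h0b hba ha
  rcases le_total 0 a with h0a | h0a
  · have hM : 0 ≤ M := (abs_nonneg a).trans ha
    have h1 : |a| ^ (p - 2) ≤ M ^ (p - 2) :=
      Real.rpow_le_rpow (abs_nonneg a) ha (by linarith)
    have h2 : |b| ^ (p - 2) ≤ M ^ (p - 2) :=
      Real.rpow_le_rpow (abs_nonneg b) hb (by linarith)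
    have h3 := mul_le_mul_of_nonneg_right h1 h0a
    have h4 := mul_le_mul_of_nonneg_right h2 (neg_nonneg.2 h0b)
    have h5 : 0 ≤ (p - 2) * (M ^ (p - 2) * (a - b)) :=
      mul_nonneg (by linarith) (mul_nonneg (Real.rpow_nonneg hM _) (by linarith))
    linarith
  · rw [abs_of_nonpos h0b] at hb ⊢
    rw [abs_of_nonpos h0a]
    have := phi_lip_pos (p := p) hp (neg_nonneg.2 h0a) (neg_le_neg hba) hb
    linarith

/-- The two summands come from the cases `p * h ≤ u`, where `(1 + 1 / p) ^ (p - 2) ≤ e`, and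
`u ≤ p * h`. -/
lemma add_rpow_split {p u h : ℝ} (hp : 2 ≤ p) (hu : 0 ≤ u) (hh : 0 ≤ h) :
    (u + h) ^ (p - 2) ≤ Real.exp 1 * u ^ (p - 2) + (p + 1) ^ (p - 2) * h ^ (p - 2) := by
  have hp2 : 0 ≤ p - 2 := by linarith
  have hp0 : 0 < p := by linarith
  rcases le_total (p * h) u with hc | hc
  · have h1 : u + h ≤ Real.exp (1 / p) * u := by
      have h2 : h ≤ 1 / p * u := by
        rw [one_div, ← div_eq_inv_mul, le_div_iff₀ hp0]; linarith
      have h3 := mul_le_mul_of_nonneg_right (Real.add_one_le_exp (1 / p)) hu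
      linarith
    have h4 := Real.rpow_le_rpow (by positivity) h1 hp2
    rw [Real.mul_rpow (Real.exp_pos _).le hu, ← Real.exp_mul] at h4
    have h5 : Real.exp (1 / p * (p - 2)) ≤ Real.exp 1 := by
      apply Real.exp_le_exp.2
      rw [one_div, ← div_eq_inv_mul, div_le_one hp0]; linarith
    have h6 := mul_le_mul_of_nonneg_right h5 (Real.rpow_nonneg hu (p - 2))
    have h7 : 0 ≤ (p + 1) ^ (p - 2) * h ^ (p - 2) := by positivity
    linarith
  · have h1 : u + h ≤ (p + 1) * h := by linarith
    have h4 := Real.rpow_le_rpow (by positivity) h1 hp2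
    rw [Real.mul_rpow (by linarith) hh] at h4
    have h7 : 0 ≤ Real.exp 1 * u ^ (p - 2) := by positivity
    linarith

/-- Second-order upper bound on the scalar Bregman divergence, expressed through the first
argument and the difference only. -/
lemma bregman_scalar {p : ℝ} (hp : 2 ≤ p) (u v : ℝ) :
    |u| ^ p - |v| ^ p - p * |v| ^ (p - 2) * v * (u - v) ≤
      p ^ 2 * Real.exp 1 * (|u| ^ (p - 2) * (u - v) ^ 2)
        + p ^ 2 * (p + 1) ^ (p - 2) * (|u - v| ^ (p - 2) * (u - v) ^ 2) := by
  have h1 := bregman_nonneg hp v u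
  have hv : |v| ≤ |u| + |u - v| := by
    have := abs_sub u (u - v)
    rwa [sub_sub_cancel] at this
  have h2 := phi_lip hp u v (M := |u| + |u - v|) (by linarith [abs_nonneg (u - v)]) hv
  have h3 := mul_le_mul_of_nonneg_left h2 (by linarith : 0 ≤ p)
  have h4 := mul_le_mul_of_nonneg_left (add_rpow_split hp (abs_nonneg u) (abs_nonneg (u - v)))
    (by positivity : 0 ≤ p ^ 2 * (u - v) ^ 2)
  have h5 : 0 ≤ p * ((|u| + |u - v|) ^ (p - 2) * (u - v) ^ 2) := by positivity
  linarith

/-- Clarkson's inequality for real numbers, in midpoint form. -/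
lemma clarkson {s : ℝ} (hs : 2 ≤ s) (a b : ℝ) :
    2 * |(a + b) / 2| ^ s + 2 * |(a - b) / 2| ^ s ≤ |a| ^ s + |b| ^ s := by
  have hsq : ∀ c : ℝ, |c| ^ s = (c ^ 2) ^ (s / 2) := by
    intro c
    rw [← sq_abs, ← Real.rpow_natCast, ← Real.rpow_mul (abs_nonneg c)]
    congr 1; push_cast; ring
  rw [hsq, hsq, hsq, hsq]
  have h1 := Real.add_rpow_le_rpow_add (sq_nonneg ((a + b) / 2)) (sq_nonneg ((a - b) / 2))
    (by linarith : 1 ≤ s / 2)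
  have h2 := (convexOn_rpow (by linarith : 1 ≤ s / 2)).2 (sq_nonneg a) (sq_nonneg b)
    (by norm_num : (0 : ℝ) ≤ 1 / 2) (by norm_num : (0 : ℝ) ≤ 1 / 2) (by norm_num)
  simp only [smul_eq_mul] at h2
  rw [show 1 / 2 * a ^ 2 + 1 / 2 * b ^ 2 = ((a + b) / 2) ^ 2 + ((a - b) / 2) ^ 2 by ring] at h2
  linarith

/-- Hölder's inequality for three families; the weights may vanish. -/
lemma holder_three {n : ℕ} (a b c : Fin n → ℝ) (ha : ∀ i, 0 ≤ a i) (hb : ∀ i, 0 ≤ b i)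
    (hc : ∀ i, 0 ≤ c i) {w₁ w₂ w₃ : ℝ} (h₁ : 0 ≤ w₁) (h₂ : 0 ≤ w₂) (h₃ : 0 ≤ w₃)
    (hw : w₁ + w₂ + w₃ = 1) :
    ∑ i, a i ^ w₁ * b i ^ w₂ * c i ^ w₃ ≤
      (∑ i, a i) ^ w₁ * (∑ i, b i) ^ w₂ * (∑ i, c i) ^ w₃ := by
  have hS : ∀ a : Fin n → ℝ, (∀ i, 0 ≤ a i) → 0 ≤ ∑ i, a i :=
    fun a ha => Finset.sum_nonneg fun i _ => ha i
  -- Normalising by the sum is harmless even when the sum is zero, since `0 / 0 = 0`.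
  have hn : ∀ (a : Fin n → ℝ) (w : ℝ), (∀ i, 0 ≤ a i) → ∀ i,
      a i ^ w = (a i / ∑ j, a j) ^ w * (∑ j, a j) ^ w := by
    intro a w ha i
    rw [← Real.mul_rpow (div_nonneg (ha i) (hS a ha)) (hS a ha)]
    congr 1
    rw [div_mul_cancel_of_imp]
    intro h0
    exact (Finset.sum_eq_zero_iff_of_nonneg fun i _ => ha i).1 h0 i (Finset.mem_univ i)
  have hone : ∀ a : Fin n → ℝ, ∑ i, a i / ∑ j, a j ≤ 1 := by
    intro a
    rw [← Finset.sum_div]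
    exact div_self_le_one _
  set P := (∑ i, a i) ^ w₁ * (∑ i, b i) ^ w₂ * (∑ i, c i) ^ w₃ with hP
  have hP0 : 0 ≤ P := mul_nonneg (mul_nonneg (Real.rpow_nonneg (hS a ha) _)
    (Real.rpow_nonneg (hS b hb) _)) (Real.rpow_nonneg (hS c hc) _)
  calc ∑ i, a i ^ w₁ * b i ^ w₂ * c i ^ w₃
      ≤ ∑ i, P * (w₁ * (a i / ∑ j, a j) + w₂ * (b i / ∑ j, b j) + w₃ * (c i / ∑ j, c j)) := by
        refine Finset.sum_le_sum fun i _ => ?_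
        have hg := Real.geom_mean_le_arith_mean3_weighted h₁ h₂ h₃
          (div_nonneg (ha i) (hS a ha)) (div_nonneg (hb i) (hS b hb))
          (div_nonneg (hc i) (hS c hc)) hw
        have := mul_le_mul_of_nonneg_left hg hP0
        rw [hn a w₁ ha i, hn b w₂ hb i, hn c w₃ hc i]
        refine le_trans (le_of_eq ?_) this
        rw [hP]; ring
    _ = P * (w₁ * ∑ i, a i / ∑ j, a j + w₂ * ∑ i, b i / ∑ j, b j
          + w₃ * ∑ i, c i / ∑ j, c j) := by
        rw [← Finset.mul_sum, Finset.sum_add_distrib, Finset.sum_add_distrib, ← Finset.mul_sum,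
          ← Finset.mul_sum, ← Finset.mul_sum]
    _ ≤ P * 1 := by
        refine mul_le_mul_of_nonneg_left ?_ hP0
        have e1 := mul_le_mul_of_nonneg_left (hone a) h₁
        have e2 := mul_le_mul_of_nonneg_left (hone b) h₂
        have e3 := mul_le_mul_of_nonneg_left (hone c) h₃
        linarith
    _ = P := mul_one P

lemma holder_sum {n : ℕ} {p s : ℝ} (hp : 2 ≤ p) (hps : p ≤ s) (u h : Fin n → ℝ) :
    ∑ i, |u i| ^ (p - 2) * h i ^ 2 ≤
      (n : ℝ) ^ ((s - p) / s) * (∑ i, |u i| ^ s) ^ ((p - 2) / s) * (∑ i, |h i| ^ s) ^ (2 / s) := by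
  have hs : 0 < s := by linarith
  have := holder_three (fun _ : Fin n => (1 : ℝ)) (fun i => |u i| ^ s) (fun i => |h i| ^ s)
    (fun _ => zero_le_one) (fun i => by positivity) (fun i => by positivity)
    (w₁ := (s - p) / s) (w₂ := (p - 2) / s) (w₃ := 2 / s)
    (div_nonneg (by linarith) hs.le) (div_nonneg (by linarith) hs.le)
    (div_nonneg (by norm_num) hs.le) (by field_simp; ring)
  simp only [Finset.sum_const, Finset.card_univ, Fintype.card_fin, nsmul_eq_mul, mul_one,
    Real.one_rpow, one_mul] at this
  refine le_trans (le_of_eq (Finset.sum_congr rfl fun i _ => ?_)) this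
  rw [← Real.rpow_mul (abs_nonneg _), ← Real.rpow_mul (abs_nonneg _), mul_div_cancel₀ _ hs.ne',
    mul_div_cancel₀ _ hs.ne', Real.rpow_two, sq_abs]

theorem stmt12 {n d : ℕ} (p s : ℝ) (hp : 2 ≤ p) (hps : p ≤ s)
    (A : Matrix (Fin n) (Fin d) ℝ) (g : Fin n → ℝ)
    (Rt : Fin n → ℝ) (hRt : ∀ i, 0 ≤ Rt i)
    (f : (Fin d → ℝ) → ℝ)
    (hf : ∀ x, f x = (∑ i, g i * A.mulVec x i)
        + (∑ i, Rt i * (A.mulVec x i) ^ 2)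
        + ∑ i, |A.mulVec x i| ^ s)
    (xstar : Fin d → ℝ) (hmin : ∀ y, f xstar ≤ f y)
    (x : Fin d → ℝ) (E : ℝ) (hE : 0 ≤ E) (hsub : f x - f xstar ≤ E) :
    omegaP p (A.mulVec xstar) (A.mulVec x)
      ≤ (n : ℝ) ^ ((s - p) / s) *
          (32 * Real.exp 1 * p ^ 2 * (lpNorm s (A.mulVec xstar)) ^ (p - 2) * E ^ (2 / s)
            + 3 * (4 * p) ^ p * E ^ (p / s)) := by
  have hs : 0 < s := by linarith
  have hp0 : 0 < p := by linarith
  set u := A.mulVec xstar with hu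
  set v := A.mulVec x with hv
  set U := ∑ i, |u i| ^ s with hU
  set H := ∑ i, |u i - v i| ^ s with hH
  have hU0 : 0 ≤ U := Finset.sum_nonneg fun i _ => by positivity
  have hH0 : 0 ≤ H := Finset.sum_nonneg fun i _ => by positivity
  have hHE : H ≤ 2 ^ s * E := by
    have hm := hmin ((1 / 2 : ℝ) • (x + xstar))
    have hmid : ∀ i, A.mulVec ((1 / 2 : ℝ) • (x + xstar)) i = (u i + v i) / 2 := by
      intro i
      rw [Matrix.mulVec_smul, Matrix.mulVec_add]
      simp only [Pi.smul_apply, Pi.add_apply, smul_eq_mul, ← hu, ← hv]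
      ring
    -- Strong convexity along the segment: the midpoint gains `2 ∑ |(uᵢ - vᵢ) / 2| ^ s`.
    have hsum : 2 * f ((1 / 2 : ℝ) • (x + xstar)) + 2 * ∑ i, |(u i - v i) / 2| ^ s
        ≤ f xstar + f x := by
      rw [hf, hf xstar, hf x]
      simp only [hmid, ← hu, ← hv, Finset.mul_sum, ← Finset.sum_add_distrib]
      refine Finset.sum_le_sum fun i _ => ?_
      have h1 := clarkson (hp.trans hps) (u i) (v i)
      have h2 := mul_nonneg (hRt i) (sq_nonneg (u i - v i))
      linarith
    have hhalf : ∑ i, |(u i - v i) / 2| ^ s = H / 2 ^ s := by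
      rw [hH, Finset.sum_div]
      refine Finset.sum_congr rfl fun i _ => ?_
      rw [abs_div, abs_two, Real.div_rpow (abs_nonneg _) (by norm_num)]
    rw [hhalf] at hsum
    have hq : 0 ≤ H / 2 ^ s := by positivity
    have : H / 2 ^ s ≤ E := by linarith
    rwa [div_le_iff₀' (by positivity)] at this
  have hpow : ∀ r : ℝ, 0 ≤ r → H ^ (r / s) ≤ 2 ^ r * E ^ (r / s) := by
    intro r hr
    have := Real.rpow_le_rpow hH0 hHE (div_nonneg hr hs.le)
    rwa [Real.mul_rpow (by positivity) hE, ← Real.rpow_mul (by norm_num),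
      mul_div_cancel₀ _ hs.ne'] at this
  have hnorm : lpNorm s u ^ (p - 2) = U ^ ((p - 2) / s) := by
    rw [lpNorm, ← Real.rpow_mul hU0]; congr 1; ring
  have hN : 0 ≤ (n : ℝ) ^ ((s - p) / s) := by positivity
  set N := (n : ℝ) ^ ((s - p) / s) with hNdef
  have hA : ∑ i, |u i| ^ (p - 2) * (u i - v i) ^ 2
      ≤ N * (4 * (U ^ ((p - 2) / s) * E ^ (2 / s))) := by
    have h1 := holder_sum hp hps u (fun i => u i - v i)
    have h2 := hpow 2 (by norm_num)
    rw [show (2 : ℝ) ^ (2 : ℝ) = 4 by norm_num] at h2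
    have h3 := mul_le_mul_of_nonneg_left h2
      (mul_nonneg hN (Real.rpow_nonneg hU0 ((p - 2) / s)))
    linarith
  have hB : ∑ i, |u i - v i| ^ (p - 2) * (u i - v i) ^ 2 ≤ N * (2 ^ p * E ^ (p / s)) := by
    have h1 := holder_sum hp hps (fun i => u i - v i) (fun i => u i - v i)
    have h2 : H ^ ((p - 2) / s) * H ^ (2 / s) = H ^ (p / s) := by
      rw [← Real.rpow_add_of_nonneg hH0 (div_nonneg (by linarith) hs.le)
        (div_nonneg (by norm_num) hs.le)]
      congr 1; ring
    have h3 := mul_le_mul_of_nonneg_left (hpow p hp0.le) hN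
    rw [← h2] at h3
    refine h1.trans (le_trans (le_of_eq ?_) h3)
    simp only [← hH, ← hNdef]; ring
  have hconst : p ^ 2 * (p + 1) ^ (p - 2) * 2 ^ p ≤ (4 * p) ^ p := by
    have h1 : (p + 1) ^ (p - 2) ≤ (2 * p) ^ (p - 2) :=
      Real.rpow_le_rpow (by linarith) (by linarith) (by linarith)
    have h2 : (4 * p) ^ p = (2 * p) ^ (p - 2) * (2 * p) ^ 2 * 2 ^ p := by
      have h3 := abs_rpow_eq hp (2 * p)
      rw [abs_of_nonneg (by positivity)] at h3
      rw [← h3, ← Real.mul_rpow (by positivity) (by norm_num)]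
      congr 1; ring
    rw [h2]
    refine mul_le_mul_of_nonneg_right ?_ (by positivity)
    have h4 : 0 ≤ (2 * p) ^ (p - 2) := by positivity
    have h5 := mul_le_mul_of_nonneg_left h1 (sq_nonneg p)
    have h6 := mul_nonneg h4 (sq_nonneg p)
    linarith
  have hω : omegaP p u v ≤
      p ^ 2 * Real.exp 1 * ∑ i, |u i| ^ (p - 2) * (u i - v i) ^ 2
        + p ^ 2 * (p + 1) ^ (p - 2) * ∑ i, |u i - v i| ^ (p - 2) * (u i - v i) ^ 2 := by
    rw [omegaP, ← Finset.sum_sub_distrib, ← Finset.sum_sub_distrib, Finset.mul_sum,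
      Finset.mul_sum, ← Finset.sum_add_distrib]
    exact Finset.sum_le_sum fun i _ => bregman_scalar hp (u i) (v i)
  rw [hnorm]
  have hA' := mul_le_mul_of_nonneg_left hA (by positivity : 0 ≤ p ^ 2 * Real.exp 1)
  have hB' := mul_le_mul_of_nonneg_left hB (by positivity : 0 ≤ p ^ 2 * (p + 1) ^ (p - 2))
  have hEp : 0 ≤ N * E ^ (p / s) := by positivity
  have hC' := mul_le_mul_of_nonneg_right hconst hEp
  have hpos1 : 0 ≤ N * (p ^ 2 * Real.exp 1 * (U ^ ((p - 2) / s) * E ^ (2 / s))) := by positivity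
  have hpos2 : 0 ≤ (4 * p) ^ p * (N * E ^ (p / s)) := by positivity
  linarith
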